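/- Let μ(dt) = e^{−V(t)}dt on a bounded interval [a,b] with V twice continuously differentiable, and suppose f is a strictly monotonic solution of Lf = −λf with f'(a) = f'(b) = 0 for some λ > 0, where Lf = f'' − V'f'. Then λ is the Neumann spectral gap of μ, i.e., C_P(μ) = 1/λ. -/

import Mathlib

open MeasureTheory Real Set

/-- Variance of `f` under `μ`, as `inf_a ∫ (f-a)^2 dμ`. -/
noncomputable def Var (μ : Measure ℝ) (f : ℝ → ℝ) : ℝ := ⨅ a : ℝ, ∫ x, (f x - a)^2 ∂μ

/-- `μ` satisfies a Poincaré inequality with constant `C`, over test functions that are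
differentiable on the supporting interval `s` with `f, f' ∈ L²(μ)`. -/
def PoincareOn (μ : Measure ℝ) (s : Set ℝ) (C : ℝ) : Prop :=
  ∀ f f' : ℝ → ℝ, (∀ x ∈ s, HasDerivAt f (f' x) x) →
    Integrable (fun x => (f x)^2) μ → Integrable (fun x => (f' x)^2) μ →
    Var μ f ≤ C * ∫ x, (f' x)^2 ∂μ

/-- The optimal Poincaré constant of `μ` on the interval `s`. -/
noncomputable def CP (μ : Measure ℝ) (s : Set ℝ) : ℝ := sInf {C | 0 ≤ C ∧ PoincareOn μ s C}

/-- `(u, u')` solves `u'' - V'u' = -λu` on `[a,b]`. -/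
def IsSol (V' : ℝ → ℝ) (a b lam : ℝ) (u u' : ℝ → ℝ) : Prop :=
  (∀ t ∈ Set.Icc a b, HasDerivAt u (u' t) t) ∧
  (∀ t ∈ Set.Icc a b, HasDerivAt u' (V' t * u' t - lam * u t) t)

/-- `lam` is a Neumann eigenvalue of `f'' - V'f' = -λf` on `[a,b]`. -/
def IsNeumannEig (V' : ℝ → ℝ) (a b lam : ℝ) : Prop :=
  ∃ u u' : ℝ → ℝ, IsSol V' a b lam u u' ∧ (∃ x ∈ Set.Icc a b, u x ≠ 0) ∧
    u' a = 0 ∧ u' b = 0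

open Filter Topology

section

variable {a b lam : ℝ} {V V' : ℝ → ℝ} {u u' : ℝ → ℝ}

theorem continuousOn_exp_neg (hV : ∀ t ∈ Icc a b, HasDerivAt V (V' t) t) :
    ContinuousOn (fun t => exp (-V t)) (Icc a b) := fun t ht =>
  (hV t ht).neg.exp.continuousAt.continuousWithinAt

/-- Integration against the normalised density `exp (-V)` on `[a, b]`. -/
theorem exists_pos_integral_eq (hab : a < b) (hV : ContinuousOn V (Icc a b)) {μ : Measure ℝ}
    (hμ : μ = (∫⁻ t in Icc a b, ENNReal.ofReal (exp (-V t)))⁻¹ •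
      (volume.restrict (Icc a b)).withDensity fun t => ENNReal.ofReal (exp (-V t))) :
    ∃ k : ℝ, 0 < k ∧ (∀ g : ℝ → ℝ, ∫ x, g x ∂μ = k * ∫ x in a..b, g x * exp (-V x)) ∧
      ∀ g : ℝ → ℝ, Integrable g μ ↔ IntegrableOn (fun x => g x * exp (-V x)) (Icc a b) := by
  have hw : ContinuousOn (fun t => exp (-V t)) (Icc a b) := hV.neg.rexp
  have hint : IntegrableOn (fun t => exp (-V t)) (Icc a b) := hw.integrableOn_Icc
  have hmeas : AEMeasurable (fun t => (exp (-V t)).toNNReal) (volume.restrict (Icc a b)) :=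
    hint.aemeasurable.real_toNNReal
  have hpos : 0 < ∫ t in Icc a b, exp (-V t) := by
    rw [integral_Icc_eq_integral_Ioc, ← intervalIntegral.integral_of_le hab.le]
    exact intervalIntegral.intervalIntegral_pos_of_pos_on
      (hw.intervalIntegrable_of_Icc hab.le) (fun _ _ => exp_pos _) hab
  have hZ : ∫⁻ t in Icc a b, ENNReal.ofReal (exp (-V t)) =
      ENNReal.ofReal (∫ t in Icc a b, exp (-V t)) :=
    (ofReal_integral_eq_lintegral_ofReal hint
      (Eventually.of_forall fun _ => (exp_pos _).le)).symm
  have hsmul : ∀ (g : ℝ → ℝ) x, (exp (-V x)).toNNReal • g x = g x * exp (-V x) := fun g x => by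
    rw [NNReal.smul_def, Real.coe_toNNReal _ (exp_pos _).le, smul_eq_mul, mul_comm]
  rw [hZ] at hμ
  refine ⟨(∫ t in Icc a b, exp (-V t))⁻¹, inv_pos.2 hpos, fun g => ?_, fun g => ?_⟩
  · have := integral_withDensity_eq_integral_smul₀ hmeas g
    simp only [hsmul] at this
    rw [hμ, integral_smul_measure, ENNReal.toReal_inv, ENNReal.toReal_ofReal hpos.le, smul_eq_mul,
      intervalIntegral.integral_of_le hab.le, ← integral_Icc_eq_integral_Ioc, ← this]
    rfl
  · have := integrable_withDensity_iff_integrable_smul₀ hmeas (g := g)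
    simp only [hsmul] at this
    rw [hμ, integrable_smul_measure (by simp) (by simpa using hpos)]
    exact this

theorem Var_le {μ : Measure ℝ} (g : ℝ → ℝ) (s : ℝ) : Var μ g ≤ ∫ x, (g x - s) ^ 2 ∂μ :=
  ciInf_le (f := fun s => ∫ x, (g x - s) ^ 2 ∂μ)
    ⟨0, by rintro _ ⟨s, rfl⟩; exact integral_nonneg fun _ => sq_nonneg _⟩ s

namespace IsSol

theorem continuousOn (h : IsSol V' a b lam u u') : ContinuousOn u (Icc a b) :=
  HasDerivAt.continuousOn h.1

theorem continuousOn_deriv (h : IsSol V' a b lam u u') : ContinuousOn u' (Icc a b) :=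
  HasDerivAt.continuousOn h.2

theorem hasDerivAt_flux (hV : ∀ t ∈ Icc a b, HasDerivAt V (V' t) t)
    (h : IsSol V' a b lam u u') {t : ℝ} (ht : t ∈ Icc a b) :
    HasDerivAt (fun t => u' t * exp (-V t)) (-lam * (u t * exp (-V t))) t := by
  refine ((h.2 t ht).mul (hV t ht).neg.exp).congr_deriv ?_
  simp only [Pi.neg_apply]
  ring

theorem integral_eq_zero (hV : ∀ t ∈ Icc a b, HasDerivAt V (V' t) t) (hab : a < b)
    (hlam : lam ≠ 0) (h : IsSol V' a b lam u u') (ha : u' a = 0) (hb : u' b = 0) :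
    ∫ x in a..b, u x * exp (-V x) = 0 := by
  have hw := continuousOn_exp_neg hV
  have key := intervalIntegral.integral_eq_sub_of_hasDerivAt (a := a) (b := b)
    (fun t ht => h.hasDerivAt_flux hV (uIcc_of_le hab.le ▸ ht))
    ((continuousOn_const.mul (h.continuousOn.mul hw)).intervalIntegrable_of_Icc hab.le)
  simpa [ha, hb, hlam] using key

theorem integral_deriv_sq (hV : ∀ t ∈ Icc a b, HasDerivAt V (V' t) t) (hab : a < b)
    (h : IsSol V' a b lam u u') (ha : u' a = 0) (hb : u' b = 0) :
    ∫ x in a..b, u' x ^ 2 * exp (-V x) = lam * ∫ x in a..b, u x ^ 2 * exp (-V x) := by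
  have hw := continuousOn_exp_neg hV
  have hu := h.continuousOn
  have hu' := h.continuousOn_deriv
  have h1 : IntervalIntegrable (fun x => u' x ^ 2 * exp (-V x)) volume a b :=
    ((hu'.pow 2).mul hw).intervalIntegrable_of_Icc hab.le
  have h2 : IntervalIntegrable (fun x => lam * (u x ^ 2 * exp (-V x))) volume a b :=
    (continuousOn_const.mul ((hu.pow 2).mul hw)).intervalIntegrable_of_Icc hab.le
  have key := intervalIntegral.integral_eq_sub_of_hasDerivAt (a := a) (b := b)
    (f := fun t => u t * (u' t * exp (-V t)))
    (f' := fun x => u' x ^ 2 * exp (-V x) - lam * (u x ^ 2 * exp (-V x)))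
    (fun t ht => by
      rw [uIcc_of_le hab.le] at ht
      refine ((h.1 t ht).mul (h.hasDerivAt_flux hV ht)).congr_deriv ?_
      ring) (h1.sub h2)
  rw [intervalIntegral.integral_sub h1 h2, intervalIntegral.integral_const_mul] at key
  simp only [ha, hb] at key
  linarith

/-- An injective Neumann eigenfunction has an interior zero, where its derivative is nonzero. -/
theorem exists_zero (hV : ∀ t ∈ Icc a b, HasDerivAt V (V' t) t) (hab : a < b)
    (hlam : lam ≠ 0) (h : IsSol V' a b lam u u') (ha : u' a = 0) (hb : u' b = 0)
    (hinj : InjOn u (Icc a b)) : ∃ c ∈ Ioo a b, u c = 0 ∧ u' c ≠ 0 := by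
  have rolle : ∀ d ∈ Ioc a b, u' d = 0 → ∃ c ∈ Ioo a d, u c = 0 := fun d hd hd0 => by
    have hsub : Icc a d ⊆ Icc a b := Icc_subset_Icc_right hd.2
    obtain ⟨c, hc, hc0⟩ := exists_hasDerivAt_eq_zero hd.1
      (HasDerivAt.continuousOn fun t ht => h.hasDerivAt_flux hV (hsub ht)) (by simp [ha, hd0])
      fun t ht => h.hasDerivAt_flux hV (hsub (Ioo_subset_Icc_self ht))
    exact ⟨c, hc, by simpa [hlam, (exp_pos _).ne'] using hc0⟩
  obtain ⟨c, hc, hc0⟩ := rolle b ⟨hab, le_rfl⟩ hb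
  refine ⟨c, hc, hc0, fun hc' => ?_⟩
  obtain ⟨e, he, he0⟩ := rolle c ⟨hc.1, hc.2.le⟩ hc'
  exact he.2.ne (hinj ⟨he.1.le, (he.2.trans hc.2).le⟩ (Ioo_subset_Icc_self hc) (he0.trans hc0.symm))

end IsSol

/-- The Poincaré constant is at least the inverse of any positive Neumann eigenvalue. -/
theorem PoincareOn.one_div_le (hV : ∀ t ∈ Icc a b, HasDerivAt V (V' t) t) (hab : a < b)
    {μ : Measure ℝ} (hμ : μ = (∫⁻ t in Icc a b, ENNReal.ofReal (exp (-V t)))⁻¹ •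
      (volume.restrict (Icc a b)).withDensity fun t => ENNReal.ofReal (exp (-V t)))
    {C : ℝ} (hC : PoincareOn μ (Ioo a b) C) (hlam : 0 < lam) (hl : IsNeumannEig V' a b lam) :
    1 / lam ≤ C := by
  obtain ⟨u, u', h, ⟨x₀, hx₀, hux₀⟩, ha, hb⟩ := hl
  have hw := continuousOn_exp_neg hV
  obtain ⟨k, hk, hint, hintegrable⟩ :=
    exists_pos_integral_eq hab (HasDerivAt.continuousOn hV) hμ
  have hu := h.continuousOn
  have hu' := h.continuousOn_deriv
  have hpos : 0 < ∫ x in a..b, u x ^ 2 * exp (-V x) :=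
    intervalIntegral.integral_pos hab ((hu.pow 2).mul hw) (fun x _ => by positivity)
      ⟨x₀, hx₀, by positivity⟩
  have hvar : k * ∫ x in a..b, u x ^ 2 * exp (-V x) ≤ Var μ u := by
    refine le_ciInf fun s => ?_
    rw [hint]
    refine mul_le_mul_of_nonneg_left ?_ hk.le
    have h1 : IntervalIntegrable (fun x => u x ^ 2 * exp (-V x)) volume a b :=
      ((hu.pow 2).mul hw).intervalIntegrable_of_Icc hab.le
    have h2 : IntervalIntegrable (fun x => 2 * s * (u x * exp (-V x))) volume a b :=
      (continuousOn_const.mul (hu.mul hw)).intervalIntegrable_of_Icc hab.le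
    have h3 : IntervalIntegrable (fun x => s ^ 2 * exp (-V x)) volume a b :=
      (continuousOn_const.mul hw).intervalIntegrable_of_Icc hab.le
    have hexpand : ∀ x, (u x - s) ^ 2 * exp (-V x) =
        u x ^ 2 * exp (-V x) - 2 * s * (u x * exp (-V x)) + s ^ 2 * exp (-V x) := fun x => by ring
    simp only [hexpand]
    rw [intervalIntegral.integral_add (h1.sub h2) h3, intervalIntegral.integral_sub h1 h2,
      intervalIntegral.integral_const_mul, h.integral_eq_zero hV hab hlam.ne' ha hb]
    have : 0 ≤ ∫ x in a..b, s ^ 2 * exp (-V x) :=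
      intervalIntegral.integral_nonneg hab.le fun x _ => by positivity
    linarith
  have hP := hvar.trans (hC u u' (fun x hx => h.1 x (Ioo_subset_Icc_self hx))
    ((hintegrable _).2 ((hu.pow 2).mul hw).integrableOn_Icc)
    ((hintegrable _).2 ((hu'.pow 2).mul hw).integrableOn_Icc))
  rw [hint, h.integral_deriv_sq hV hab ha hb] at hP
  rw [div_le_iff₀ hlam]
  refine le_of_mul_le_mul_right ?_ (mul_pos hk hpos)
  linarith

/-- A function on `(a, b)` with square-integrable derivative is bounded. -/
theorem exists_abs_le_of_integrableOn_deriv_sq {c : ℝ} (hc : c ∈ Ioo a b) {h h' : ℝ → ℝ}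
    (hd : ∀ x ∈ Ioo a b, HasDerivAt h (h' x) x)
    (hint : IntegrableOn (fun x => h' x ^ 2) (Icc a b)) :
    ∃ M, ∀ x ∈ Ioo a b, |h x| ≤ M := by
  have hφ : IntegrableOn (fun x => 1 + h' x ^ 2) (Icc a b) :=
    (continuousOn_const.integrableOn_Icc).add hint
  have hincr : ∀ g g' : ℝ → ℝ, (∀ x ∈ Ioo a b, HasDerivAt g (g' x) x) →
      (∀ x, g' x ≤ 1 + h' x ^ 2) → ∀ x ∈ Ioo a b, ∀ y ∈ Ioo a b, x ≤ y →
      g y - g x ≤ ∫ x in a..b, (1 + h' x ^ 2) := fun g g' hg hle x hx y hy hxy => by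
    have hsub : Icc x y ⊆ Ioo a b := Icc_subset_Ioo hx.1 hy.2
    refine (intervalIntegral.sub_le_integral_of_hasDeriv_right_of_le hxy
      (HasDerivAt.continuousOn fun t ht => hg t (hsub ht))
      (fun t ht => (hg t (hsub (Ioo_subset_Icc_self ht))).hasDerivWithinAt)
      (hφ.mono_set (hsub.trans Ioo_subset_Icc_self)) fun t _ => hle t).trans ?_
    exact intervalIntegral.integral_mono_interval hx.1.le hxy hy.2.le
      (Eventually.of_forall fun t => by positivity)
      ((intervalIntegrable_iff_integrableOn_Icc_of_le (hc.1.trans hc.2).le).2 hφ)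
  have h1 := hincr h h' hd fun x => by nlinarith [sq_nonneg (h' x - 1)]
  have h2 := hincr (fun x => -h x) (fun x => -h' x) (fun x hx => (hd x hx).neg)
    fun x => by nlinarith [sq_nonneg (h' x + 1)]
  refine ⟨|h c| + ∫ x in a..b, (1 + h' x ^ 2), fun x hx => ?_⟩
  have hle := le_abs_self (h c)
  have hge := neg_abs_le (h c)
  rcases le_total x c with hxc | hcx
  · have := h1 x hx c hc hxc
    have := h2 x hx c hc hxc
    exact abs_le.2 ⟨by linarith, by linarith⟩
  · have := h1 c hc x hx hcx
    have := h2 c hc x hx hcx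
    exact abs_le.2 ⟨by linarith, by linarith⟩

/-- If `u` vanishes only at `c`, then `h² u' e^{-V} / u` has a derivative on `(a, b)` that is at
most `(h'² - lam h²) e^{-V}`, whenever `h c = 0`. -/
theorem IsSol.exists_hasDerivAt_le (hV : ∀ t ∈ Icc a b, HasDerivAt V (V' t) t)
    (hs : IsSol V' a b lam u u') {c : ℝ} (hu0 : u c = 0) (hu'0 : u' c ≠ 0)
    (hne : ∀ x ∈ Icc a b, x ≠ c → u x ≠ 0) {h h' : ℝ → ℝ} (hh : h c = 0) {x : ℝ}
    (hx : x ∈ Icc a b) (hd : HasDerivAt h (h' x) x) :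
    ∃ D, HasDerivAt (fun t => h t ^ 2 * (u' t * exp (-V t)) / u t) D x ∧
      D ≤ h' x ^ 2 * exp (-V x) - lam * (h x ^ 2 * exp (-V x)) := by
  by_cases hxc : x = c
  · subst hxc
    refine ⟨h' x ^ 2 * exp (-V x), ?_, by simp [hh]⟩
    have hp := (hs.hasDerivAt_flux hV hx).continuousAt.tendsto.mono_left
      (nhdsWithin_le_nhds (s := {x}ᶜ))
    have hlim := (((hd.tendsto_slope.pow 2).mul hp).div (hs.1 x hx).tendsto_slope hu'0)
    rw [hasDerivAt_iff_tendsto_slope]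
    have hval : h' x ^ 2 * (u' x * exp (-V x)) / u' x = h' x ^ 2 * exp (-V x) := by
      field_simp
    rw [hval] at hlim
    refine hlim.congr' ?_
    filter_upwards [self_mem_nhdsWithin] with t ht
    have ht' : t - x ≠ 0 := sub_ne_zero.2 ht
    simp only [Pi.div_apply, slope_def_field, hh, hu0, sub_zero, div_zero]
    by_cases hut : u t = 0
    · simp [hut]
    · field_simp
  · have hux := hne x hx hxc
    refine ⟨_, ((hd.pow 2).mul (hs.hasDerivAt_flux hV hx)).div (hs.1 x hx) hux, ?_⟩
    have hsq : 0 ≤ (h' x - h x * u' x / u x) ^ 2 * exp (-V x) := by positivity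
    refine le_of_sub_nonneg (hsq.trans_eq ?_)
    simp
    field_simp
    ring

/-- Poincaré inequality, with the sharp constant, for functions vanishing at the zero of an
injective Neumann eigenfunction. -/
theorem IsSol.integral_sq_le (hV : ∀ t ∈ Icc a b, HasDerivAt V (V' t) t)
    (hs : IsSol V' a b lam u u') (ha : u' a = 0) (hb : u' b = 0) {c : ℝ} (hc : c ∈ Ioo a b)
    (hu0 : u c = 0) (hu'0 : u' c ≠ 0)
    (hne : ∀ x ∈ Icc a b, x ≠ c → u x ≠ 0) {h h' : ℝ → ℝ} (hh : h c = 0)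
    (hd : ∀ x ∈ Ioo a b, HasDerivAt h (h' x) x)
    (hint : IntegrableOn (fun x => h' x ^ 2 * exp (-V x)) (Icc a b)) :
    lam * ∫ x in a..b, h x ^ 2 * exp (-V x) ≤ ∫ x in a..b, h' x ^ 2 * exp (-V x) := by
  have hab : a ≤ b := (hc.1.trans hc.2).le
  have hw := continuousOn_exp_neg hV
  have hint' : IntegrableOn (fun x => h' x ^ 2) (Icc a b) := by
    have := hint.mul_continuousOn (HasDerivAt.continuousOn hV).rexp isCompact_Icc
    refine this.congr_fun (fun x _ => ?_) measurableSet_Icc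
    simp only [mul_assoc, ← exp_add]
    simp
  obtain ⟨M, hM⟩ : ∃ M, ∀ x ∈ Icc a b, |h x ^ 2| ≤ M := by
    obtain ⟨M, hM⟩ := exists_abs_le_of_integrableOn_deriv_sq hc hd hint'
    refine ⟨max M (max |h a| |h b|) ^ 2, fun x hx => ?_⟩
    rw [abs_pow]
    refine pow_le_pow_left₀ (abs_nonneg _) ?_ 2
    rcases eq_endpoints_or_mem_Ioo_of_mem_Icc hx with rfl | rfl | hx'
    · exact (le_max_left _ _).trans (le_max_right _ _)
    · exact (le_max_right _ _).trans (le_max_right _ _)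
    · exact (hM x hx').trans (le_max_left _ _)
  have hh2 : IntegrableOn (fun x => h x ^ 2) (Icc a b) := by
    rw [integrableOn_Icc_iff_integrableOn_Ioo]
    exact IntegrableOn.of_bound measure_Ioo_lt_top
      (((HasDerivAt.continuousOn hd).pow 2).aestronglyMeasurable measurableSet_Ioo) M
      ((ae_restrict_iff' measurableSet_Ioo).2
        (Eventually.of_forall fun x hx => hM x (Ioo_subset_Icc_self hx)))
  have hh2w : IntegrableOn (fun x => lam * (h x ^ 2 * exp (-V x))) (Icc a b) :=
    (hh2.mul_continuousOn hw isCompact_Icc).const_mul lam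
  choose! D hD hDle using fun x (hx : x ∈ Ioo a b) =>
    hs.exists_hasDerivAt_le hV hu0 hu'0 hne hh (Ioo_subset_Icc_self hx) (hd x hx)
  have hend : ∀ x ∈ Icc a b, x ≠ c → u' x = 0 → ContinuousWithinAt
      (fun t => h t ^ 2 * (u' t * exp (-V t)) / u t) (Icc a b) x := fun x hx hxc hx0 => by
    have hq : Tendsto (fun t => u' t * exp (-V t) / u t) (𝓝[Icc a b] x) (𝓝 0) := by
      have := ((hs.hasDerivAt_flux hV hx).continuousAt.div
        (hs.1 x hx).continuousAt (hne x hx hxc)).tendsto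
      simp only [hx0, zero_mul, zero_div, Pi.div_apply] at this
      exact this.mono_left nhdsWithin_le_nhds
    have := bdd_le_mul_tendsto_zero' M
      (eventually_nhdsWithin_of_forall (a := x) hM) hq
    simpa only [ContinuousWithinAt, hx0, zero_mul, mul_zero, zero_div, mul_div_assoc] using this
  have hcont : ContinuousOn (fun t => h t ^ 2 * (u' t * exp (-V t)) / u t) (Icc a b) := by
    intro x hx
    rcases eq_endpoints_or_mem_Ioo_of_mem_Icc hx with rfl | rfl | hx'
    · exact hend _ hx hc.1.ne ha
    · exact hend _ hx hc.2.ne' hb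
    · exact (hD x hx').continuousAt.continuousWithinAt
  have key := intervalIntegral.sub_le_integral_of_hasDeriv_right_of_le hab hcont
    (fun x hx => (hD x hx).hasDerivWithinAt) (hint.sub hh2w) hDle
  have e1 := (intervalIntegrable_iff_integrableOn_Icc_of_le hab).2 hint
  have e2 := (intervalIntegrable_iff_integrableOn_Icc_of_le hab).2 hh2w
  simp only [ha, hb, zero_mul, mul_zero, zero_div, sub_zero] at key
  simp only [Pi.sub_apply] at key
  rw [intervalIntegral.integral_sub e1 e2, intervalIntegral.integral_const_mul] at key
  linarith

end

/-- a strictly monotonic Neumann eigenfunction with eigenvalue `λ > 0`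
realizes the spectral gap, so `C_P(μ) = 1/λ`. -/
theorem stmt17 (a b : ℝ) (hab : a < b) (V V' V'' : ℝ → ℝ)
    (hV' : ∀ t ∈ Set.Icc a b, HasDerivAt V (V' t) t)
    (hV'' : ∀ t ∈ Set.Icc a b, HasDerivAt V' (V'' t) t)
    (hV''c : ContinuousOn V'' (Set.Icc a b))
    (μ : Measure ℝ)
    (hμ : μ = (∫⁻ t in Set.Icc a b, ENNReal.ofReal (Real.exp (-V t)))⁻¹ •
      (MeasureTheory.volume.restrict (Set.Icc a b)).withDensity
        fun t => ENNReal.ofReal (Real.exp (-V t)))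
    (lam : ℝ) (hlam : 0 < lam) (f f' : ℝ → ℝ)
    (hsol : IsSol V' a b lam f f')
    (hmonot : StrictMonoOn f (Set.Icc a b) ∨ StrictAntiOn f (Set.Icc a b))
    (hfa : f' a = 0) (hfb : f' b = 0) :
    IsNeumannEig V' a b lam ∧
    (∀ lam' : ℝ, 0 < lam' → IsNeumannEig V' a b lam' → lam ≤ lam') ∧
    PoincareOn μ (Set.Ioo a b) (1/lam) ∧
    (∀ C, 0 ≤ C → PoincareOn μ (Set.Ioo a b) C → 1/lam ≤ C) := by
  have hinj : InjOn f (Icc a b) := hmonot.elim StrictMonoOn.injOn StrictAntiOn.injOn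
  obtain ⟨c, hc, hfc, hf'c⟩ := hsol.exists_zero hV' hab hlam.ne' hfa hfb hinj
  have hne : ∀ x ∈ Icc a b, x ≠ c → f x ≠ 0 := fun x hx hxc hfx =>
    hxc (hinj hx (Ioo_subset_Icc_self hc) (hfx.trans hfc.symm))
  have heig : IsNeumannEig V' a b lam :=
    ⟨f, f', hsol, ⟨a, left_mem_Icc.2 hab.le, hne a (left_mem_Icc.2 hab.le) hc.1.ne⟩, hfa, hfb⟩
  have hP : PoincareOn μ (Ioo a b) (1 / lam) := by
    intro g g' hg _ hg'
    obtain ⟨k, hk, hint, hintegrable⟩ :=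
      exists_pos_integral_eq hab (HasDerivAt.continuousOn hV') hμ
    refine (Var_le g (g c)).trans ?_
    have key := hsol.integral_sq_le hV' hfa hfb hc hfc hf'c hne (h := fun x => g x - g c)
      (sub_self _) (fun x hx => (hg x hx).sub_const _) ((hintegrable _).1 hg')
    rw [hint, hint, one_div_mul_eq_div, le_div_iff₀ hlam]
    linarith [mul_le_mul_of_nonneg_left key hk.le]
  refine ⟨heig, fun lam' hlam' h' => ?_, hP, fun C _ hC => hC.one_div_le hV' hab hμ hlam heig⟩
  exact (one_div_le_one_div hlam' hlam).1 (hP.one_div_le hV' hab hμ hlam' h')
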